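/- Let k ≥ 4 be an integer and let G be a finite simple graph on n ≥ 4k − 4 vertices with minimum degree δ(G) ≥ k, equipped with a proper edge colouring (adjacent edges receive distinct colours). Then G contains a rainbow matching of size k. -/

import Mathlib

/-- A rainbow matching in an edge-coloured graph `(G, c)`: a finite set of edges of `G`
that are pairwise vertex-disjoint and whose colours are pairwise distinct. -/
def IsRainbowMatching {V : Type*} (G : SimpleGraph V) (c : Sym2 V → ℕ)
    (M : Finset (Sym2 V)) : Prop :=
  (∀ e ∈ M, e ∈ G.edgeSet) ∧
  (∀ e ∈ M, ∀ f ∈ M, e ≠ f → ∀ v : V, ¬(v ∈ e ∧ v ∈ f)) ∧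
  (∀ e ∈ M, ∀ f ∈ M, c e = c f → e = f)

/-- `c` is a proper edge colouring of `G`: distinct edges of `G` sharing a vertex
receive distinct colours. -/
def IsProperEdgeColouring {V : Type*} (G : SimpleGraph V) (c : Sym2 V → ℕ) : Prop :=
  ∀ e ∈ G.edgeSet, ∀ f ∈ G.edgeSet, e ≠ f → (∃ v : V, v ∈ e ∧ v ∈ f) → c e ≠ c f

/-!
Suppose a maximum rainbow matching has size `q < k`, so that every degree exceeds `q`. A matching
edge with an end that has many neighbours outside the matching, in unused colours, can be dropped
from the matching and that end recorded as a hub vertex: however a few vertices and colours are put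
to other use, an edge at the hub can be added back. Likewise, a colour occurring on many edges
outside the matching can become a hub colour. As long as hubs can be filled in at the end, the
remaining matching still admits no augmentation. Counting the edges at the vertices outside the
matching and the hubs shows that, in a large graph, some matching edge always yields one more hub,
until no matching edge is left, which is absurd.

This works once it has been started, that is, with `4 * q` vertices and at least one hub, or with
`4 * q + 3` vertices and no hub; the latter settles `q ≤ 2`. For `q ≥ 3` and no hub, the count
yields matching edges of large load. Two matching edges can never be exchanged for three others, so
around an edge `e` of large load the outside vertices joined to the matching in an unused colour are
all used up by two vertices attached to `e` and, with at most one exception, one vertex for each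
other matching edge. That makes at most `q + 2` vertices, whereas every one of the at least `2 * q`
outside vertices is joined to the matching in an unused colour.
-/

open Finset

section RainbowMatching

variable {V : Type*} {G : SimpleGraph V} {c : Sym2 V → ℕ}

namespace IsProperEdgeColouring

variable {v : V} {O P : Finset V} {Q : Finset ℕ}

theorem eq_of_colour_eq (hc : IsProperEdgeColouring G c) {u w : V} (hu : G.Adj v u)
    (hw : G.Adj v w) (h : c s(v, u) = c s(v, w)) : u = w := by
  by_contra hne
  exact hc s(v, u) hu s(v, w) hw (fun h' ↦ hne (Sym2.congr_right.1 h')) ⟨v, by simp, by simp⟩ h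

theorem card_le_of_colour_mem (hc : IsProperEdgeColouring G c) (hO : ∀ u ∈ O, G.Adj v u)
    (hQ : ∀ u ∈ O, c s(v, u) ∈ Q) : #O ≤ #Q :=
  card_le_card_of_injOn (fun u ↦ c s(v, u)) hQ
    fun u hu w hw h ↦ hc.eq_of_colour_eq (hO u hu) (hO w hw) h

theorem card_le_two_of_colour_eq (hc : IsProperEdgeColouring G c) (x : V) {a : ℕ}
    (hO : ∀ u ∈ O, u ≠ x → G.Adj v u ∧ c s(v, u) = a) : #O ≤ 2 := by
  classical
  have hle : #(O.erase x) ≤ #{a} :=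
    hc.card_le_of_colour_mem (v := v) (by grind) (by grind)
  have := pred_card_le_card_erase (s := O) (a := x)
  grind

theorem exists_neighbor_avoiding (hc : IsProperEdgeColouring G c)
    (hO : ∀ u ∈ O, G.Adj v u) (hcard : #P + #Q < #O) : ∃ u ∈ O, u ∉ P ∧ c s(v, u) ∉ Q := by
  classical
  by_contra! hcon
  have hle : #(O \ P) ≤ #Q := hc.card_le_of_colour_mem (v := v) (by grind) (by grind)
  have := le_card_sdiff P O
  omega

end IsProperEdgeColouring

namespace IsRainbowMatching

variable {M N : Finset (Sym2 V)} {e f : Sym2 V} {v : V}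

theorem mono (hM : IsRainbowMatching G c M) (h : N ⊆ M) : IsRainbowMatching G c N :=
  ⟨fun e he ↦ hM.1 e (h he), fun e he f hf ↦ hM.2.1 e (h he) f (h hf),
    fun e he f hf ↦ hM.2.2 e (h he) f (h hf)⟩

theorem empty : IsRainbowMatching G c ∅ := by
  simp [IsRainbowMatching]

theorem singleton (he : e ∈ G.edgeSet) : IsRainbowMatching G c {e} := by
  simp_all [IsRainbowMatching]

theorem eq_of_mem_of_mem (hM : IsRainbowMatching G c M) (he : e ∈ M) (hf : f ∈ M) (hve : v ∈ e)
    (hvf : v ∈ f) : e = f := by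
  by_contra hne
  exact hM.2.1 e he f hf hne v ⟨hve, hvf⟩

end IsRainbowMatching

theorem exists_isRainbowMatching_forall_card_le [Finite V] (G : SimpleGraph V) (c : Sym2 V → ℕ) :
    ∃ B, IsRainbowMatching G c B ∧ ∀ M, IsRainbowMatching G c M → #M ≤ #B :=
  Set.exists_max_image {M | IsRainbowMatching G c M} card (Set.toFinite _) ⟨∅, .empty⟩

variable [DecidableEq V]

/-- The set of vertices covered by a finite set of edges. -/
def matchedVerts (M : Finset (Sym2 V)) : Finset V :=
  M.biUnion Sym2.toFinset

section MatchedVerts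

variable {M N : Finset (Sym2 V)} {u v : V}

@[simp, grind =]
theorem mem_matchedVerts : v ∈ matchedVerts M ↔ ∃ e ∈ M, v ∈ e := by
  simp [matchedVerts]

theorem matchedVerts_union : matchedVerts (M ∪ N) = matchedVerts M ∪ matchedVerts N :=
  union_biUnion

@[grind =]
theorem matchedVerts_insert_mk :
    matchedVerts (insert s(u, v) M) = insert u (insert v (matchedVerts M)) := by
  simp [matchedVerts, Sym2.toFinset_mk_eq]

@[grind =]
theorem matchedVerts_singleton_mk :
    matchedVerts ({s(u, v)} : Finset (Sym2 V)) = {u, v} := by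
  simp [matchedVerts, Sym2.toFinset_mk_eq]

theorem card_matchedVerts_le (M : Finset (Sym2 V)) : #(matchedVerts M) ≤ 2 * #M := by
  rw [mul_comm]
  refine card_biUnion_le_card_mul _ _ _ fun e _ ↦ ?_
  rw [Sym2.card_toFinset]
  split_ifs <;> omega

theorem card_union_of_disjoint_matchedVerts (hV : Disjoint (matchedVerts M) (matchedVerts N)) :
    #(M ∪ N) = #M + #N := by
  refine card_union_of_disjoint (disjoint_left.2 fun e heM heN ↦ ?_)
  exact disjoint_left.1 hV (mem_matchedVerts.2 ⟨e, heM, e.out_fst_mem⟩)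
    (mem_matchedVerts.2 ⟨e, heN, e.out_fst_mem⟩)

end MatchedVerts

namespace IsRainbowMatching

variable {M N B E F : Finset (Sym2 V)} {u v : V}

theorem union (hM : IsRainbowMatching G c M) (hN : IsRainbowMatching G c N)
    (hV : Disjoint (matchedVerts M) (matchedVerts N)) (hC : Disjoint (M.image c) (N.image c)) :
    IsRainbowMatching G c (M ∪ N) := by
  rw [disjoint_left] at hV hC
  simp only [mem_matchedVerts, mem_image] at hV hC
  refine ⟨?_, ?_, ?_⟩ <;> simp only [mem_union]
  · exact fun e he ↦ he.elim (hM.1 e) (hN.1 e)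
  · rintro e (he | he) f (hf | hf) hne v ⟨hve, hvf⟩
    · exact hM.2.1 e he f hf hne v ⟨hve, hvf⟩
    · exact hV ⟨e, he, hve⟩ ⟨f, hf, hvf⟩
    · exact hV ⟨f, hf, hvf⟩ ⟨e, he, hve⟩
    · exact hN.2.1 e he f hf hne v ⟨hve, hvf⟩
  · rintro e (he | he) f (hf | hf) h
    · exact hM.2.2 e he f hf h
    · exact (hC ⟨e, he, h⟩ ⟨f, hf, rfl⟩).elim
    · exact (hC ⟨f, hf, rfl⟩ ⟨e, he, h⟩).elim
    · exact hN.2.2 e he f hf h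

theorem insert_mk (hM : IsRainbowMatching G c M) (huv : G.Adj u v) (hu : u ∉ matchedVerts M)
    (hv : v ∉ matchedVerts M) (hcol : c s(u, v) ∉ M.image c) :
    IsRainbowMatching G c (insert s(u, v) M) := by
  rw [insert_eq]
  refine (singleton huv).union hM ?_ (by simpa using hcol)
  simp_all [matchedVerts, Sym2.toFinset_mk_eq]

theorem sum_matchedVerts (hM : IsRainbowMatching G c M) (f : V → ℕ) :
    ∑ v ∈ matchedVerts M, f v = ∑ e ∈ M, ∑ v ∈ e.toFinset, f v := by
  refine sum_biUnion fun e he e' he' hne ↦ disjoint_left.2 fun v hv hv' ↦ ?_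
  rw [Sym2.mem_toFinset] at hv hv'
  exact hM.2.1 e he e' he' hne v ⟨hv, hv'⟩

theorem mem_matchedVerts_sdiff (hM : IsRainbowMatching G c M) (hE : E ⊆ M) :
    v ∈ matchedVerts (M \ E) ↔ v ∈ matchedVerts M ∧ v ∉ matchedVerts E := by
  have := fun e f ↦ hM.eq_of_mem_of_mem (e := e) (f := f) (v := v)
  grind

theorem mem_image_colour_sdiff (hM : IsRainbowMatching G c M) (hE : E ⊆ M) {a : ℕ} :
    a ∈ (M \ E).image c ↔ a ∈ M.image c ∧ a ∉ E.image c := by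
  have := hM.2.2
  grind

theorem exists_of_exchange (hB : IsRainbowMatching G c B) (hF : IsRainbowMatching G c F)
    (hE : E ⊆ B) (hV : matchedVerts F ∩ matchedVerts B ⊆ matchedVerts E)
    (hC : F.image c ∩ B.image c ⊆ E.image c) :
    ∃ M, IsRainbowMatching G c M ∧ #M + #E = #B + #F := by
  have hdisj : Disjoint (matchedVerts F) (matchedVerts (B \ E)) :=
    disjoint_left.2 fun v hvF hv ↦ by
      rw [hB.mem_matchedVerts_sdiff hE] at hv
      exact hv.2 (hV (mem_inter.2 ⟨hvF, hv.1⟩))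
  refine ⟨F ∪ B \ E, hF.union (hB.mono sdiff_subset) hdisj (disjoint_left.2 fun a haF ha ↦ ?_), ?_⟩
  · rw [hB.mem_image_colour_sdiff hE] at ha
    exact ha.2 (hC (mem_inter.2 ⟨haF, ha.1⟩))
  · have := card_sdiff_add_card_eq_card hE
    rw [card_union_of_disjoint_matchedVerts hdisj]
    omega

end IsRainbowMatching

/-- `N` serves the hub vertices `X` and the hub colours `Z`: it is a rainbow matching with one edge
for each member of `X` and of `Z`, it avoids the vertices in `P` and the colours in `Q`, and it
takes up few vertices outside `X` and few colours outside `Z`. -/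
structure IsHubMatching (G : SimpleGraph V) (c : Sym2 V → ℕ) (X : Finset V) (Z : Finset ℕ)
    (P : Finset V) (Q : Finset ℕ) (N : Finset (Sym2 V)) : Prop where
  isRainbowMatching : IsRainbowMatching G c N
  card_eq : #N = #X + #Z
  disjoint_verts : Disjoint (matchedVerts N) P
  disjoint_colours : Disjoint (N.image c) Q
  card_verts_sdiff_le : #(matchedVerts N \ X) ≤ #X + 2 * #Z
  card_colours_sdiff_le : #(N.image c \ Z) ≤ #X

namespace IsHubMatching

variable {X P P' : Finset V} {Z Q Q' : Finset ℕ} {N : Finset (Sym2 V)} {u v : V}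

theorem empty : IsHubMatching G c ∅ ∅ P Q ∅ :=
  ⟨.empty, rfl, by simp [matchedVerts], by simp, by simp [matchedVerts], by simp⟩

theorem mono (hN : IsHubMatching G c X Z P Q N) (hP : P' ⊆ P) (hQ : Q' ⊆ Q) :
    IsHubMatching G c X Z P' Q' N :=
  { hN with
    disjoint_verts := hN.disjoint_verts.mono_right hP
    disjoint_colours := hN.disjoint_colours.mono_right hQ }

theorem insert_vertex (hN : IsHubMatching G c X Z P Q N) (huv : G.Adj v u) (hvX : v ∉ X)
    (hv : v ∉ matchedVerts N ∪ P) (hu : u ∉ matchedVerts N ∪ P)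
    (hcol : c s(v, u) ∉ N.image c ∪ Q) :
    IsHubMatching G c (insert v X) Z P Q (insert s(v, u) N) := by
  rw [notMem_union] at hv hu hcol
  have hnew : s(v, u) ∉ N := fun h ↦ hcol.1 (mem_image_of_mem c h)
  refine ⟨hN.isRainbowMatching.insert_mk huv hv.1 hu.1 hcol.1, ?_, ?_, ?_, ?_, ?_⟩
  · rw [card_insert_of_notMem hnew, card_insert_of_notMem hvX, hN.card_eq]
    omega
  · simp [matchedVerts_insert_mk, hv.2, hu.2, hN.disjoint_verts]
  · simp [image_insert, hcol.2, hN.disjoint_colours]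
  · have hsub : matchedVerts (insert s(v, u) N) \ insert v X ⊆ insert u (matchedVerts N \ X) := by
      rw [matchedVerts_insert_mk]
      grind
    have := card_le_card hsub
    grind [hN.card_verts_sdiff_le]
  · have hsub : (insert s(v, u) N).image c \ Z ⊆ insert (c s(v, u)) (N.image c \ Z) := by
      grind
    have := card_le_card hsub
    grind [hN.card_colours_sdiff_le]

theorem insert_colour (hN : IsHubMatching G c X Z P Q N) (huv : G.Adj v u)
    (hv : v ∉ matchedVerts N ∪ P) (hu : u ∉ matchedVerts N ∪ P) (hZ : c s(v, u) ∉ Z)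
    (hcol : c s(v, u) ∉ N.image c ∪ Q) :
    IsHubMatching G c X (insert (c s(v, u)) Z) P Q (insert s(v, u) N) := by
  rw [notMem_union] at hv hu hcol
  have hnew : s(v, u) ∉ N := fun h ↦ hcol.1 (mem_image_of_mem c h)
  refine ⟨hN.isRainbowMatching.insert_mk huv hv.1 hu.1 hcol.1, ?_, ?_, ?_, ?_, ?_⟩
  · rw [card_insert_of_notMem hnew, card_insert_of_notMem hZ, hN.card_eq]
    omega
  · simp [matchedVerts_insert_mk, hv.2, hu.2, hN.disjoint_verts]
  · simp [image_insert, hcol.2, hN.disjoint_colours]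
  · have hsub : matchedVerts (insert s(v, u) N) \ X ⊆
        insert v (insert u (matchedVerts N \ X)) := by
      rw [matchedVerts_insert_mk]
      grind
    have := card_le_card hsub
    grind [hN.card_verts_sdiff_le]
  · have hsub : (insert s(v, u) N).image c \ insert (c s(v, u)) Z ⊆ N.image c \ Z := by
      grind
    exact (card_le_card hsub).trans hN.card_colours_sdiff_le

end IsHubMatching

section NeighbourSets

variable [Fintype V] [DecidableRel G.Adj] {P : Finset V} {Q : Finset ℕ} {a : ℕ} {u v z : V}

variable (G c) in
/-- The neighbours of `v` outside `P` that are joined to `v` by an edge with colour outside `Q`. -/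
def freshNeighbors (P : Finset V) (Q : Finset ℕ) (v : V) : Finset V :=
  {u | G.Adj v u ∧ u ∉ P ∧ c s(v, u) ∉ Q}

variable (G c) in
/-- The vertices covered by the edges of colour `a` outside `P`. -/
def colourVerts (P : Finset V) (a : ℕ) : Finset V :=
  {z | z ∉ P ∧ ∃ z', z' ∉ P ∧ G.Adj z z' ∧ c s(z, z') = a}

@[simp, grind =]
theorem mem_freshNeighbors :
    u ∈ freshNeighbors G c P Q v ↔ G.Adj v u ∧ u ∉ P ∧ c s(v, u) ∉ Q := by
  simp [freshNeighbors]

@[simp, grind =]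
theorem mem_colourVerts :
    z ∈ colourVerts G c P a ↔ z ∉ P ∧ ∃ z', z' ∉ P ∧ G.Adj z z' ∧ c s(z, z') = a := by
  simp [colourVerts]

theorem exists_adj_avoiding (hc : IsProperEdgeColouring G c) {D : Finset V}
    (hD : 2 * #D < #(colourVerts G c P a)) :
    ∃ z z', G.Adj z z' ∧ c s(z, z') = a ∧ z ∉ P ∪ D ∧ z' ∉ P ∪ D := by
  have hpartner : ∀ z ∈ colourVerts G c P a, ∃ z', z' ∉ P ∧ G.Adj z z' ∧ c s(z, z') = a :=
    fun z hz ↦ (mem_colourVerts.1 hz).2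
  choose! partner hP hadj hcol using hpartner
  by_contra! hcon
  have hmaps : ∀ z ∈ colourVerts G c P a \ D, partner z ∈ D := fun z hz ↦ by
    obtain ⟨hz, hzD⟩ := mem_sdiff.1 hz
    have := hcon z (partner z) (hadj z hz) (hcol z hz)
    grind
  have hinj : #(colourVerts G c P a \ D) ≤ #D := by
    refine card_le_card_of_injOn partner hmaps fun z hz w hw h ↦ ?_
    obtain ⟨hz, -⟩ := mem_sdiff.1 (mem_coe.1 hz)
    obtain ⟨hw, -⟩ := mem_sdiff.1 (mem_coe.1 hw)
    refine hc.eq_of_colour_eq (hadj z hz).symm (h ▸ (hadj w hw).symm) ?_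
    rw [Sym2.eq_swap, hcol z hz, h, Sym2.eq_swap, hcol w hw]
  have := le_card_sdiff D (colourVerts G c P a)
  omega

end NeighbourSets

/-- A maximum rainbow matching of size `q`, split into a rainbow matching `B` and a part that is
left open, of which only its hub vertices `X` and its hub colours `Z` are recorded: even after a few
more vertices `A` and colours `C` have been put to other use, the open part can be filled in so as
to avoid them and `B`. The bounds `3` and `4` are the most that a single exchange needs. -/
structure HubSystem (G : SimpleGraph V) (c : Sym2 V → ℕ) (q : ℕ) where
  B : Finset (Sym2 V)
  X : Finset V
  Z : Finset ℕ
  isRainbowMatching : IsRainbowMatching G c B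
  disjoint_verts : Disjoint X (matchedVerts B)
  disjoint_colours : Disjoint Z (B.image c)
  card_add : #B + #X + #Z = q
  card_le : ∀ M, IsRainbowMatching G c M → #M ≤ q
  exists_isHubMatching : ∀ A C, #A ≤ 3 → #A + #C ≤ 4 → Disjoint A X → Disjoint C Z →
    ∃ N, IsHubMatching G c X Z (matchedVerts B ∪ A) (B.image c ∪ C) N

namespace HubSystem

variable {q : ℕ}

/-- A maximum rainbow matching, without hubs. -/
def ofMaximum {B : Finset (Sym2 V)} (hB : IsRainbowMatching G c B)
    (hmax : ∀ M, IsRainbowMatching G c M → #M ≤ #B) : HubSystem G c #B where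
  B := B
  X := ∅
  Z := ∅
  isRainbowMatching := hB
  disjoint_verts := disjoint_empty_left _
  disjoint_colours := disjoint_empty_left _
  card_add := rfl
  card_le := hmax
  exists_isHubMatching _ _ _ _ _ _ := ⟨∅, .empty⟩

/-- The vertices covered by the matching, together with the hub vertices. -/
def usedVerts (S : HubSystem G c q) : Finset V :=
  matchedVerts S.B ∪ S.X

/-- The colours of the matching, together with the hub colours. -/
def usedColours (S : HubSystem G c q) : Finset ℕ :=
  S.B.image c ∪ S.Z

variable {S : HubSystem G c q} {E F : Finset (Sym2 V)} {A : Finset V} {C : Finset ℕ}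
  {e : Sym2 V} {v w : V}

theorem mem_usedVerts_of_mem (he : e ∈ S.B) (hv : v ∈ e) : v ∈ S.usedVerts :=
  mem_union_left _ (mem_matchedVerts.2 ⟨e, he, hv⟩)

theorem colour_mem_usedColours (he : e ∈ S.B) : c e ∈ S.usedColours :=
  mem_union_left _ (mem_image_of_mem c he)

theorem card_le_of_exchange (S : HubSystem G c q) (hF : IsRainbowMatching G c F) (hE : E ⊆ S.B)
    (hA : Disjoint A S.usedVerts) (hC : Disjoint C S.usedColours)
    (hFA : matchedVerts F ⊆ matchedVerts E ∪ A) (hFC : F.image c ⊆ E.image c ∪ C)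
    (hA3 : #A ≤ 3) (hAC4 : #A + #C ≤ 4) : #F ≤ #E := by
  rw [usedVerts, disjoint_union_right] at hA
  rw [usedColours, disjoint_union_right] at hC
  obtain ⟨N, hN⟩ := S.exists_isHubMatching A C hA3 hAC4 hA.2 hC.2
  have hV := hN.disjoint_verts
  have hQ := hN.disjoint_colours
  rw [disjoint_union_right] at hV hQ
  have hBN : IsRainbowMatching G c (S.B ∪ N) :=
    S.isRainbowMatching.union hN.isRainbowMatching hV.1.symm hQ.1.symm
  obtain ⟨M, hM, hcard⟩ := hBN.exists_of_exchange hF (hE.trans subset_union_left)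
    (by rw [matchedVerts_union]; grind [disjoint_left]) (by rw [image_union]; grind [disjoint_left])
  have := card_union_of_disjoint_matchedVerts hV.1.symm
  have := S.card_le M hM
  have := S.card_add
  have := hN.card_eq
  omega

theorem colour_ne_of_mem (hc : IsProperEdgeColouring G c) (he : e ∈ S.B) (hv : v ∈ e)
    (hadj : G.Adj v w) (hw : w ∉ S.usedVerts) : c s(v, w) ≠ c e := by
  refine hc _ hadj _ (S.isRainbowMatching.1 e he) ?_ ⟨v, Sym2.mem_mk_left v w, hv⟩
  rintro rfl
  exact hw (mem_usedVerts_of_mem he (Sym2.mem_mk_right v w))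

variable [Fintype V]

/-- The vertices left untouched by the matching and the hubs. -/
def free (S : HubSystem G c q) : Finset V :=
  S.usedVertsᶜ

@[simp, grind =]
theorem mem_free : w ∈ S.free ↔ w ∉ S.usedVerts :=
  mem_compl

theorem card_le_card_free_add (S : HubSystem G c q) :
    Fintype.card V ≤ #S.free + 2 * #S.B + #S.X := by
  have := card_compl_add_card S.usedVerts
  have := card_union_le (matchedVerts S.B) S.X
  have := card_matchedVerts_le S.B
  simp only [free, usedVerts] at *
  omega

variable [DecidableRel G.Adj]

/-- The neighbours outside the used vertices that `v` is joined to in an unused colour. -/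
def fresh (S : HubSystem G c q) (v : V) : Finset V :=
  freshNeighbors G c S.usedVerts S.usedColours v

/-- The neighbours outside the used vertices that `v` is joined to in a colour other than the hub
colours, so possibly in a colour of the matching. -/
def avail (S : HubSystem G c q) (v : V) : Finset V :=
  freshNeighbors G c S.usedVerts S.Z v

/-- The vertices covered by the edges of colour `a` outside the used vertices. -/
def coloured (S : HubSystem G c q) (a : ℕ) : Finset V :=
  colourVerts G c S.usedVerts a

/-- The contribution of a matching edge to a count over the unused vertices: the number of edges
joining it to them in colours other than the hub colours, plus the number of them that are covered
by an edge of its colour. -/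
def load (S : HubSystem G c q) (e : Sym2 V) : ℕ :=
  (∑ v ∈ e.toFinset, #(S.avail v)) + #(S.coloured (c e))

variable {a : ℕ} {u u' x y z z' : V}

@[simp, grind =]
theorem mem_fresh :
    u ∈ S.fresh v ↔ G.Adj v u ∧ u ∉ S.usedVerts ∧ c s(v, u) ∉ S.usedColours :=
  mem_freshNeighbors

@[simp, grind =]
theorem mem_avail : u ∈ S.avail v ↔ G.Adj v u ∧ u ∉ S.usedVerts ∧ c s(v, u) ∉ S.Z :=
  mem_freshNeighbors

@[simp, grind =]
theorem mem_coloured : z ∈ S.coloured a ↔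
    z ∉ S.usedVerts ∧ ∃ z', z' ∉ S.usedVerts ∧ G.Adj z z' ∧ c s(z, z') = a :=
  mem_colourVerts

theorem fresh_subset_avail (S : HubSystem G c q) (v : V) : S.fresh v ⊆ S.avail v := fun u hu ↦ by
  grind [usedColours]

theorem fresh_eq_empty (hw : w ∉ S.usedVerts) : S.fresh w = ∅ := by
  refine eq_empty_of_forall_notMem fun u hu ↦ ?_
  obtain ⟨hadj, huV, hcol⟩ := mem_fresh.1 hu
  have := S.card_le_of_exchange (.singleton (e := s(w, u)) hadj) (empty_subset _) (A := {w, u})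
    (C := {c s(w, u)}) (by simp [hw, huV]) (by simpa using hcol)
    (by simp [matchedVerts, Sym2.toFinset_mk_eq]) (by simp) (by grind) (by grind)
  simp at this

theorem colour_eq_of_mem_fresh (hxy : s(x, y) ∈ S.B) (hu : u ∈ S.fresh x) (hu' : u' ∈ S.fresh y)
    (hne : u ≠ u') : c s(x, u) = c s(y, u') := by
  by_contra hcol
  have hxyne : x ≠ y := (S.isRainbowMatching.1 _ hxy).ne
  have hx := mem_usedVerts_of_mem hxy (Sym2.mem_mk_left x y)
  have hy := mem_usedVerts_of_mem hxy (Sym2.mem_mk_right x y)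
  rw [mem_fresh] at hu hu'
  have hF : IsRainbowMatching G c {s(x, u), s(y, u')} :=
    (IsRainbowMatching.singleton hu'.1).insert_mk hu.1 (by grind) (by grind)
      (by simpa using hcol)
  have := S.card_le_of_exchange hF (singleton_subset_iff.2 hxy) (A := {u, u'})
    (C := {c s(x, u), c s(y, u')}) (by grind [disjoint_left]) (by grind [disjoint_left])
    (by grind) (by grind) (by grind) (by grind)
  grind

theorem eq_or_eq_of_mem_fresh (he : e ∈ S.B) (hv : v ∈ e) (hu : u ∈ S.fresh v)
    (hz : z ∉ S.usedVerts) (hz' : z' ∉ S.usedVerts) (hadj : G.Adj z z')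
    (hcol : c s(z, z') = c e) : u = z ∨ u = z' := by
  by_contra! hne
  have hvB := mem_usedVerts_of_mem he hv
  have heC := colour_mem_usedColours he
  rw [mem_fresh] at hu
  have hF : IsRainbowMatching G c {s(v, u), s(z, z')} :=
    (IsRainbowMatching.singleton hadj).insert_mk hu.1 (by grind) (by grind)
      (by grind)
  have := S.card_le_of_exchange hF (singleton_subset_iff.2 he) (A := {u, z, z'})
    (C := {c s(v, u)}) (by grind [disjoint_left]) (by grind [disjoint_left])
    (by grind) (by grind) (by grind) (by grind)
  grind

theorem card_fresh_le_two (hc : IsProperEdgeColouring G c) (hxy : s(x, y) ∈ S.B)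
    (hy : (S.fresh y).Nonempty) : #(S.fresh x) ≤ 2 := by
  obtain ⟨u', hu'⟩ := hy
  exact hc.card_le_two_of_colour_eq u' fun u hu hne ↦
    ⟨(mem_fresh.1 hu).1, colour_eq_of_mem_fresh hxy hu hu' hne⟩

theorem exists_fresh_subset_pair (he : e ∈ S.B) (h : (S.coloured (c e)).Nonempty) :
    ∃ z z', z ∉ S.usedVerts ∧ z' ∉ S.usedVerts ∧ G.Adj z z' ∧ c s(z, z') = c e ∧
      ∀ v ∈ e, S.fresh v ⊆ {z, z'} := by
  obtain ⟨z, hz⟩ := h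
  obtain ⟨hzV, z', hzV', hadj, hcol⟩ := mem_coloured.1 hz
  refine ⟨z, z', hzV, hzV', hadj, hcol, fun v hv u hu ↦ ?_⟩
  simpa using eq_or_eq_of_mem_fresh he hv hu hzV hzV' hadj hcol

theorem card_coloured_le_two (hc : IsProperEdgeColouring G c) (he : e ∈ S.B) (hv : v ∈ e)
    (h : (S.fresh v).Nonempty) : #(S.coloured (c e)) ≤ 2 := by
  obtain ⟨u, hu⟩ := h
  refine hc.card_le_two_of_colour_eq (v := u) (a := c e) u fun z hz hzu ↦ ?_
  obtain ⟨hzV, z', hzV', hadj, hcol⟩ := mem_coloured.1 hz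
  obtain rfl | rfl := eq_or_eq_of_mem_fresh he hv hu hzV hzV' hadj hcol
  · exact (hzu rfl).elim
  · exact ⟨hadj.symm, by rwa [Sym2.eq_swap]⟩

theorem card_avail_add_one_le (hc : IsProperEdgeColouring G c) (he : e ∈ S.B) (hv : v ∈ e) :
    #(S.avail v) + 1 ≤ #(S.fresh v) + #S.B := by
  have hle : #(S.avail v \ S.fresh v) ≤ #((S.B.erase e).image c) := by
    refine hc.card_le_of_colour_mem (v := v) (by grind) fun u hu ↦ ?_
    have hne := colour_ne_of_mem hc he hv (w := u)
    grind [usedColours]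
  have := card_image_le (s := S.B.erase e) (f := c)
  have := card_erase_add_one he
  have := card_sdiff_add_card_eq_card (S.fresh_subset_avail v)
  omega

theorem load_mk (hxy : x ≠ y) :
    S.load s(x, y) = #(S.avail x) + #(S.avail y) + #(S.coloured (c s(x, y))) := by
  rw [load, Sym2.toFinset_mk_eq, sum_pair hxy]

theorem load_add_two_le (hc : IsProperEdgeColouring G c) (hxy : s(x, y) ∈ S.B) :
    S.load s(x, y) + 2 ≤
      #(S.fresh x) + #(S.fresh y) + #(S.coloured (c s(x, y))) + 2 * #S.B := by
  have hx := card_avail_add_one_le hc hxy (Sym2.mem_mk_left x y)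
  have hy := card_avail_add_one_le hc hxy (Sym2.mem_mk_right x y)
  have hne : x ≠ y := (S.isRainbowMatching.1 _ hxy).ne
  rw [load_mk hne]
  omega

theorem exists_le_card_fresh_or_le_card_coloured (hc : IsProperEdgeColouring G c) (he : e ∈ S.B)
    {g : ℕ} (hg : 7 ≤ g) (hload : g + 2 * #S.B ≤ S.load e + 2) :
    (∃ v ∈ e, g ≤ #(S.fresh v)) ∨ g ≤ #(S.coloured (c e)) := by
  induction e with | _ x y
  have hsum := load_add_two_le hc he
  have he' : s(y, x) ∈ S.B := by rwa [Sym2.eq_swap]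
  have hx : 0 < #(S.fresh x) → #(S.fresh y) ≤ 2 ∧ #(S.coloured (c s(x, y))) ≤ 2 := fun h ↦
    ⟨card_fresh_le_two hc he' (card_pos.1 h), card_coloured_le_two hc he (by simp) (card_pos.1 h)⟩
  have hy : 0 < #(S.fresh y) → #(S.fresh x) ≤ 2 ∧ #(S.coloured (c s(x, y))) ≤ 2 := fun h ↦
    ⟨card_fresh_le_two hc he (card_pos.1 h), card_coloured_le_two hc he (by simp) (card_pos.1 h)⟩
  have hz : 0 < #(S.coloured (c s(x, y))) → #(S.fresh x) ≤ 2 ∧ #(S.fresh y) ≤ 2 := fun h ↦ by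
    obtain ⟨z, z', -, -, -, -, hsub⟩ := exists_fresh_subset_pair he (card_pos.1 h)
    exact ⟨(card_le_card (hsub x (by simp))).trans card_le_two,
      (card_le_card (hsub y (by simp))).trans card_le_two⟩
  by_contra! hcon
  have := hcon.1 x (by simp)
  have := hcon.1 y (by simp)
  omega

theorem card_add_one_le_of_lt_degree (hc : IsProperEdgeColouring G c) (hw : w ∈ S.free)
    (hdeg : q < G.degree w) :
    #S.B + 1 ≤ #{u ∈ matchedVerts S.B | w ∈ S.avail u} + #{e ∈ S.B | w ∈ S.coloured (c e)} := by
  by_contra! hlt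
  set U := {u ∈ matchedVerts S.B | w ∈ S.avail u}
  set L := {e ∈ S.B | w ∈ S.coloured (c e)}
  have hcard : #(S.X ∪ U) + #(S.Z ∪ L.image c) < #(G.neighborFinset w) := by
    have := card_union_le S.X U
    have := card_union_le S.Z (L.image c)
    have := card_image_le (s := L) (f := c)
    have := S.card_add
    rw [G.card_neighborFinset_eq_degree]
    omega
  obtain ⟨u, hu, huXU, hcol⟩ :=
    hc.exists_neighbor_avoiding (fun u hu ↦ (G.mem_neighborFinset w u).1 hu) hcard
  rw [G.mem_neighborFinset] at hu
  have hfresh : u ∉ S.fresh w := by simp [fresh_eq_empty (mem_free.1 hw)]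
  have hswap : c s(w, u) = c s(u, w) := by rw [Sym2.eq_swap]
  have := hu.symm
  grind [usedVerts, usedColours]

theorem card_free_mul_le_sum_load (hc : IsProperEdgeColouring G c) (S : HubSystem G c q)
    (hdeg : ∀ v, q < G.degree v) : #S.free * (#S.B + 1) ≤ ∑ e ∈ S.B, S.load e := by
  calc #S.free * (#S.B + 1)
      ≤ ∑ w ∈ S.free,
          (#{u ∈ matchedVerts S.B | w ∈ S.avail u} + #{e ∈ S.B | w ∈ S.coloured (c e)}) :=
        card_nsmul_le_sum _ _ _ fun w hw ↦ card_add_one_le_of_lt_degree hc hw (hdeg w)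
    _ = ∑ u ∈ matchedVerts S.B, #{w ∈ S.free | w ∈ S.avail u} +
          ∑ e ∈ S.B, #{w ∈ S.free | w ∈ S.coloured (c e)} := by
        rw [sum_add_distrib]
        congr 1
        · exact sum_card_bipartiteAbove_eq_sum_card_bipartiteBelow fun w u ↦ w ∈ S.avail u
        · exact sum_card_bipartiteAbove_eq_sum_card_bipartiteBelow fun w e ↦ w ∈ S.coloured (c e)
    _ = ∑ u ∈ matchedVerts S.B, #(S.avail u) + ∑ e ∈ S.B, #(S.coloured (c e)) := by
        congr! 3 <;> grind
    _ = ∑ e ∈ S.B, S.load e := by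
        rw [S.isRainbowMatching.sum_matchedVerts, ← sum_add_distrib]
        rfl

theorem exists_isHubMatching_insert_vertex (hc : IsProperEdgeColouring G c) (hxy : s(x, y) ∈ S.B)
    (hx : 4 + 2 * #S.X + 2 * #S.Z ≤ #(S.fresh x)) (hA3 : #A ≤ 3) (hAC : #A + #C ≤ 4)
    (hA : Disjoint A (insert x S.X)) (hC : Disjoint C S.Z) :
    ∃ N, IsHubMatching G c (insert x S.X) S.Z (matchedVerts (S.B \ {s(x, y)}) ∪ A)
      ((S.B \ {s(x, y)}).image c ∪ C) N := by
  have hE : {s(x, y)} ⊆ S.B := singleton_subset_iff.2 hxy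
  have hverts := fun v ↦ S.isRainbowMatching.mem_matchedVerts_sdiff hE (v := v)
  have hcols := fun a ↦ S.isRainbowMatching.mem_image_colour_sdiff hE (a := a)
  have hX := disjoint_left.1 S.disjoint_verts
  have hZ := disjoint_left.1 S.disjoint_colours
  have hopt : ∀ u ∈ insert y (S.fresh x), G.Adj x u ∧ u ∉ matchedVerts (S.B \ {s(x, y)}) ∪ S.X ∧
      c s(x, u) ∉ (S.B \ {s(x, y)}).image c ∪ S.Z := by
    have hadj : G.Adj x y := S.isRainbowMatching.1 _ hxy
    grind [usedVerts, usedColours]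
  rw [disjoint_insert_right] at hA
  obtain ⟨N, hN⟩ := S.exists_isHubMatching A C hA3 hAC hA.2 hC
  -- The partner of `x` has to miss `A`, `C` and whatever `N` takes up; `y` is one more candidate.
  obtain ⟨u, hu, huA, hcol⟩ := hc.exists_neighbor_avoiding (v := x) (O := insert y (S.fresh x))
    (P := A ∪ (matchedVerts N \ S.X)) (Q := C ∪ (N.image c \ S.Z)) (fun u hu ↦ (hopt u hu).1) (by
      have hy : y ∉ S.fresh x := fun h ↦
        (mem_fresh.1 h).2.1 (mem_usedVerts_of_mem hxy (Sym2.mem_mk_right x y))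
      have := card_union_le A (matchedVerts N \ S.X)
      have := card_union_le C (N.image c \ S.Z)
      have := hN.card_verts_sdiff_le
      have := hN.card_colours_sdiff_le
      rw [card_insert_of_notMem hy]
      omega)
  obtain ⟨hadj, huV, huC⟩ := hopt u hu
  have hN' := hN.mono (P' := matchedVerts (S.B \ {s(x, y)}) ∪ A)
    (Q' := (S.B \ {s(x, y)}).image c ∪ C) (by grind) (by grind)
  have hNV := disjoint_right.1 hN.disjoint_verts
  exact ⟨insert s(x, u) N, hN'.insert_vertex hadj (by grind) (by grind) (by grind) (by grind)⟩

theorem exists_insert_vertex (hc : IsProperEdgeColouring G c) (hxy : s(x, y) ∈ S.B)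
    (hx : 4 + 2 * #S.X + 2 * #S.Z ≤ #(S.fresh x)) :
    ∃ S' : HubSystem G c q, #S'.B + 1 = #S.B ∧ #S'.X = #S.X + 1 ∧ #S'.Z = #S.Z := by
  have hE : {s(x, y)} ⊆ S.B := singleton_subset_iff.2 hxy
  have hxX : x ∉ S.X := disjoint_right.1 S.disjoint_verts (mem_matchedVerts.2 ⟨_, hxy, by simp⟩)
  have hcard : #(S.B \ {s(x, y)}) + 1 = #S.B := card_sdiff_add_card_eq_card hE
  refine ⟨{ B := S.B \ {s(x, y)}, X := insert x S.X, Z := S.Z,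
            isRainbowMatching := S.isRainbowMatching.mono sdiff_subset,
            disjoint_verts := disjoint_right.2 fun v hv ↦ ?_,
            disjoint_colours := S.disjoint_colours.mono_right (image_subset_image sdiff_subset),
            card_add := ?_,
            card_le := S.card_le,
            exists_isHubMatching := fun A C ↦ exists_isHubMatching_insert_vertex hc hxy hx },
    hcard, card_insert_of_notMem hxX, rfl⟩
  · have hB := disjoint_right.1 S.disjoint_verts
    grind [S.isRainbowMatching.mem_matchedVerts_sdiff hE]
  · have := S.card_add
    grind

theorem card_coloured_add_two_le (he : e ∈ S.B) : #(S.coloured (c e)) + 2 ≤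
    #(colourVerts G c (matchedVerts (S.B \ {e}) ∪ S.X) (c e)) := by
  induction e with | _ x y
  have hadj : G.Adj x y := S.isRainbowMatching.1 _ he
  have hx := mem_usedVerts_of_mem he (Sym2.mem_mk_left x y)
  have hy := mem_usedVerts_of_mem he (Sym2.mem_mk_right x y)
  have hX := disjoint_left.1 S.disjoint_verts
  have hverts := fun v ↦
    S.isRainbowMatching.mem_matchedVerts_sdiff (singleton_subset_iff.2 he) (v := v)
  have hcard : #(insert x (insert y (S.coloured (c s(x, y))))) = #(S.coloured (c s(x, y))) + 2 := by
    grind [hadj.ne]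
  rw [← hcard]
  refine card_le_card fun z hz ↦ ?_
  have := hadj.symm
  grind [usedVerts]

theorem exists_isHubMatching_insert_colour (hc : IsProperEdgeColouring G c) (he : e ∈ S.B)
    (hcard : 5 + 2 * #S.X + 4 * #S.Z ≤ #(S.coloured (c e))) (hA3 : #A ≤ 3) (hAC : #A + #C ≤ 4)
    (hA : Disjoint A S.X) (hC : Disjoint C (insert (c e) S.Z)) :
    ∃ N, IsHubMatching G c S.X (insert (c e) S.Z) (matchedVerts (S.B \ {e}) ∪ A)
      ((S.B \ {e}).image c ∪ C) N := by
  have hE : {e} ⊆ S.B := singleton_subset_iff.2 he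
  have hverts := fun v ↦ S.isRainbowMatching.mem_matchedVerts_sdiff hE (v := v)
  have hcols := fun a ↦ S.isRainbowMatching.mem_image_colour_sdiff hE (a := a)
  have hX := disjoint_left.1 S.disjoint_verts
  have hZ := disjoint_right.1 S.disjoint_colours
  rw [disjoint_insert_right] at hC
  obtain ⟨N, hN⟩ := S.exists_isHubMatching A C hA3 hAC hA hC.2
  obtain ⟨z, z', hadj, hcol, hz, hz'⟩ := exists_adj_avoiding hc (a := c e)
    (P := matchedVerts (S.B \ {e}) ∪ S.X) (D := A ∪ (matchedVerts N \ S.X)) (by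
      have := card_coloured_add_two_le he
      have := card_union_le A (matchedVerts N \ S.X)
      have := hN.card_verts_sdiff_le
      omega)
  have hN' := hN.mono (P' := matchedVerts (S.B \ {e}) ∪ A)
    (Q' := (S.B \ {e}).image c ∪ C) (by grind) (by grind)
  have hNC := disjoint_right.1 hN.disjoint_colours
  rw [← hcol]
  refine ⟨insert s(z, z') N, hN'.insert_colour hadj ?_ ?_ ?_ ?_⟩
  · grind
  · grind
  · grind
  · grind

theorem exists_insert_colour (hc : IsProperEdgeColouring G c) (he : e ∈ S.B)
    (h : 5 + 2 * #S.X + 4 * #S.Z ≤ #(S.coloured (c e))) :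
    ∃ S' : HubSystem G c q, #S'.B + 1 = #S.B ∧ #S'.X = #S.X ∧ #S'.Z = #S.Z + 1 := by
  have hE : {e} ⊆ S.B := singleton_subset_iff.2 he
  have heZ : c e ∉ S.Z := disjoint_right.1 S.disjoint_colours (mem_image_of_mem c he)
  have hcard : #(S.B \ {e}) + 1 = #S.B := card_sdiff_add_card_eq_card hE
  refine ⟨{ B := S.B \ {e}, X := S.X, Z := insert (c e) S.Z,
            isRainbowMatching := S.isRainbowMatching.mono sdiff_subset,
            disjoint_verts := S.disjoint_verts.mono_right
              (biUnion_subset_biUnion_of_subset_left _ sdiff_subset),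
            disjoint_colours := disjoint_right.2 fun a ha ↦ ?_,
            card_add := ?_,
            card_le := S.card_le,
            exists_isHubMatching := fun A C ↦ exists_isHubMatching_insert_colour hc he h },
    hcard, rfl, card_insert_of_notMem heZ⟩
  · have hB := disjoint_right.1 S.disjoint_colours
    rw [S.isRainbowMatching.mem_image_colour_sdiff hE] at ha
    grind
  · have := S.card_add
    grind

theorem exists_insert_hub (hc : IsProperEdgeColouring G c) (S : HubSystem G c q)
    (hdeg : ∀ v, q < G.degree v) {s : ℕ} (hs : 3 ≤ s) (hsXZ : 2 * #S.X + 4 * #S.Z ≤ s)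
    (hfree : 2 * #S.B + s ≤ #S.free) :
    ∃ S' : HubSystem G c q, #S'.B + 1 = #S.B ∧
      (#S'.X = #S.X + 1 ∧ #S'.Z = #S.Z ∨ #S'.X = #S.X ∧ #S'.Z = #S.Z + 1) := by
  obtain ⟨e, he, hload⟩ : ∃ e ∈ S.B, 2 * #S.B + s + 3 ≤ S.load e := by
    by_contra! hcon
    have hsum := card_free_mul_le_sum_load hc S hdeg
    have := sum_le_card_nsmul S.B S.load (2 * #S.B + s + 2) fun e he ↦
      Nat.le_of_lt_succ (hcon e he)
    have := Nat.mul_le_mul_right (#S.B + 1) hfree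
    rw [smul_eq_mul] at *
    linarith
  obtain ⟨v, hv, hfresh⟩ | hcol :=
    exists_le_card_fresh_or_le_card_coloured hc he (g := s + 5) (by omega) (by omega)
  · obtain ⟨w, rfl⟩ := hv
    obtain ⟨S', hB, hXZ⟩ := exists_insert_vertex hc he (by omega)
    exact ⟨S', hB, .inl hXZ⟩
  · obtain ⟨S', hB, hXZ⟩ := exists_insert_colour hc he (by omega)
    exact ⟨S', hB, .inr hXZ⟩

theorem card_lt (hc : IsProperEdgeColouring G c) (S : HubSystem G c q)
    (hdeg : ∀ v, q < G.degree v) {t : ℕ} (ht : 3 ≤ 3 * #S.X + 4 * #S.Z + t) :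
    Fintype.card V < 4 * q + t := by
  by_contra! hcon
  have hfree : 2 * #S.B + (3 * #S.X + 4 * #S.Z + t) ≤ #S.free := by
    have := S.card_le_card_free_add
    have := S.card_add
    omega
  obtain ⟨S', hB, hXZ⟩ := exists_insert_hub hc S hdeg ht (by omega) hfree
  have : #S'.B < #S.B := Nat.lt_of_succ_le hB.le
  have := card_lt hc S' hdeg (t := t) (by omega)
  omega
termination_by #S.B

theorem exists_mem_fresh (hc : IsProperEdgeColouring G c) (hw : w ∈ S.free)
    (hdeg : q < G.degree w) : ∃ e ∈ S.B, ∃ v ∈ e, w ∈ S.fresh v := by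
  have hcard : #S.X + #S.usedColours < #(G.neighborFinset w) := by
    have := card_union_le (S.B.image c) S.Z
    have := card_image_le (s := S.B) (f := c)
    have := S.card_add
    rw [G.card_neighborFinset_eq_degree, usedColours]
    omega
  obtain ⟨u, hu, huX, hcol⟩ :=
    hc.exists_neighbor_avoiding (fun u hu ↦ (G.mem_neighborFinset w u).1 hu) hcard
  have hadj : G.Adj w u := (G.mem_neighborFinset w u).1 hu
  have huV : u ∈ S.usedVerts := by
    by_contra huV
    exact notMem_empty u (fresh_eq_empty (mem_free.1 hw) ▸ mem_fresh.2 ⟨hadj, huV, hcol⟩)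
  obtain ⟨e, he, hue⟩ := mem_matchedVerts.1 ((mem_union.1 huV).resolve_right huX)
  exact ⟨e, he, u, hue, mem_fresh.2 ⟨hadj.symm, mem_free.1 hw, by rwa [Sym2.eq_swap]⟩⟩

theorem card_fresh_le_three (hc : IsProperEdgeColouring G c) (hdeg : ∀ v, q < G.degree v)
    (hB : #S.B = q) (hV : 4 * q ≤ Fintype.card V) (he : e ∈ S.B) (hv : v ∈ e) :
    #(S.fresh v) ≤ 3 := by
  by_contra! hlt
  obtain ⟨w, rfl⟩ := hv
  have := S.card_add
  obtain ⟨S', -, hX, -⟩ := exists_insert_vertex hc he (by omega)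
  have := card_lt hc S' hdeg (t := 0) (by omega)
  omega

theorem card_coloured_le_four (hc : IsProperEdgeColouring G c) (hdeg : ∀ v, q < G.degree v)
    (hB : #S.B = q) (hV : 4 * q ≤ Fintype.card V) (he : e ∈ S.B) :
    #(S.coloured (c e)) ≤ 4 := by
  by_contra! hlt
  have := S.card_add
  obtain ⟨S', -, -, hZ⟩ := exists_insert_colour hc he (by omega)
  have := card_lt hc S' hdeg (t := 0) (by omega)
  omega

theorem colour_eq_of_three_for_two (hc : IsProperEdgeColouring G c) (hB : #S.B = q)
    {l : Sym2 V} {t b b' : V} (he : e ∈ S.B) (hl : l ∈ S.B) (hv : v ∈ e) (hw : w ∈ S.avail v)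
    (hcol : c s(v, w) = c l) (ht : t ∈ l) (hz : z ∈ S.fresh t) (hzw : z ≠ w) (hb : G.Adj b b')
    (hbV : ∀ u ∈ s(b, b'), (u ∈ e ∨ u ∉ S.usedVerts) ∧ u ≠ v ∧ u ≠ w ∧ u ≠ z)
    (hbC : c s(b, b') = c e ∨ c s(b, b') ∉ S.usedColours) : c s(b, b') = c s(t, z) := by
  by_contra hbz
  -- Otherwise `s(v, w)`, `s(t, z)` and `s(b, b')` could replace `e` and `l`.
  obtain ⟨hvw, hwV, -⟩ := mem_avail.1 hw
  obtain ⟨htz, hzV, hzC⟩ := mem_fresh.1 hz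
  have hle : c l ≠ c e := hcol ▸ colour_ne_of_mem hc he hv hvw hwV
  have hvV := mem_usedVerts_of_mem he hv
  have htV := mem_usedVerts_of_mem hl ht
  have hlC := colour_mem_usedColours hl
  have hte : t ∉ e := fun h ↦ hle (congrArg c (S.isRainbowMatching.eq_of_mem_of_mem hl he ht h))
  have hF : IsRainbowMatching G c {s(v, w), s(t, z), s(b, b')} := by
    refine ((IsRainbowMatching.singleton (e := s(b, b')) hb).insert_mk htz ?_ ?_ ?_).insert_mk
      hvw ?_ ?_ ?_ <;> grind
  have hF3 : #{s(v, w), s(t, z), s(b, b')} = 3 := by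
    refine card_eq_three.2 ⟨_, _, _, ?_, ?_, ?_, rfl⟩ <;> intro h <;> have := congrArg c h <;> grind
  have hV : matchedVerts {s(v, w), s(t, z), s(b, b')} ∩ matchedVerts S.B ⊆
      matchedVerts {e, l} := fun u hu ↦ by
    rw [matchedVerts_insert_mk, matchedVerts_insert_mk, matchedVerts_singleton_mk, mem_inter] at hu
    have huV : u ∈ S.usedVerts := mem_union_left _ hu.2
    simp only [mem_insert, mem_singleton, ← Sym2.mem_iff] at hu
    suffices u ∈ e ∨ u ∈ l by simpa
    obtain ⟨rfl | rfl | rfl | rfl | hu, -⟩ := hu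
    exacts [.inl hv, (hwV huV).elim, .inr ht, (hzV huV).elim,
      .inl ((hbV u hu).1.resolve_right (not_not.2 huV))]
  have hC : Finset.image c {s(v, w), s(t, z), s(b, b')} ∩ S.B.image c ⊆
      Finset.image c {e, l} := fun a ha ↦ by
    have haC : a ∈ S.usedColours := mem_union_left _ (mem_inter.1 ha).2
    simp only [image_insert, image_singleton, mem_inter, mem_insert, mem_singleton] at ha ⊢
    obtain ⟨rfl | rfl | rfl, -⟩ := ha
    exacts [.inr hcol, (hzC haC).elim, .inl (hbC.resolve_right (not_not.2 haC))]
  obtain ⟨M, hM, hcard⟩ := S.isRainbowMatching.exists_of_exchange hF (by grind) hV hC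
  have := S.card_le M hM
  have := card_le_two (a := e) (b := l)
  omega

/-- The fresh neighbours of the two ends of `e`. -/
def edgeFresh (S : HubSystem G c q) (e : Sym2 V) : Finset V :=
  e.toFinset.biUnion S.fresh

@[simp]
theorem mem_edgeFresh : w ∈ S.edgeFresh e ↔ ∃ v ∈ e, w ∈ S.fresh v := by
  simp [edgeFresh]

/-- At most two vertices that stand in the way of every replacement of `e`: the fresh neighbours of
`e` lie in `P`, and if an edge from `e` to a vertex `w` outside `P` can take over the colour of a
matching edge `l`, then `l` has no fresh neighbour outside `P` other than `w`. -/
structure IsBlockingPair (S : HubSystem G c q) (e : Sym2 V) (P : Finset V) : Prop where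
  card_le : #P ≤ 2
  edgeFresh_subset : S.edgeFresh e ⊆ P
  edgeFresh_subset_insert : ∀ v ∈ e, ∀ w ∈ S.avail v \ P, ∀ l ∈ S.B, c s(v, w) = c l →
    S.edgeFresh l ⊆ insert w P

theorem isBlockingPair_of_colour_eq (hc : IsProperEdgeColouring G c) (hB : #S.B = q) (he : e ∈ S.B)
    (hz : z ∉ S.usedVerts) (hz' : z' ∉ S.usedVerts) (hadj : G.Adj z z')
    (hcol : c s(z, z') = c e) : S.IsBlockingPair e {z, z'} := by
  refine ⟨card_le_two, fun u hu ↦ ?_, fun v hv w hw l hl hvw u hu ↦ ?_⟩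
  · obtain ⟨v, hv, hu⟩ := mem_edgeFresh.1 hu
    simpa using eq_or_eq_of_mem_fresh he hv hu hz hz' hadj hcol
  · obtain ⟨t, ht, hu⟩ := mem_edgeFresh.1 hu
    by_contra hout
    have hvV := mem_usedVerts_of_mem he hv
    have heC := colour_mem_usedColours he
    have := colour_eq_of_three_for_two hc hB he hl hv (mem_sdiff.1 hw).1 hvw ht hu (by grind) hadj
      (by simp only [Sym2.mem_iff]; grind) (.inl hcol)
    grind

theorem fresh_subset_fresh (hc : IsProperEdgeColouring G c) (hxy : s(x, y) ∈ S.B)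
    (hy : 2 ≤ #(S.fresh y)) : S.fresh x ⊆ S.fresh y := fun u hu ↦ by
  by_contra huy
  have : #(S.fresh y) ≤ #{c s(x, u)} := by
    refine hc.card_le_of_colour_mem (v := y) (fun u' hu' ↦ (mem_fresh.1 hu').1) fun u' hu' ↦ ?_
    have hne : u ≠ u' := fun h ↦ huy (h ▸ hu')
    rw [colour_eq_of_mem_fresh hxy hu hu' hne, mem_singleton]
  rw [card_singleton] at this
  omega

theorem isBlockingPair_of_fresh_eq (hc : IsProperEdgeColouring G c) (hB : #S.B = q) (he : e ∈ S.B)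
    {P : Finset V} (hP : #P = 2) (hfresh : ∀ v ∈ e, S.fresh v = P) : S.IsBlockingPair e P := by
  refine ⟨hP.le, fun u hu ↦ ?_, fun v hv w hw l hl hvw u hu ↦ ?_⟩
  · obtain ⟨v, hv, hu⟩ := mem_edgeFresh.1 hu
    exact hfresh v hv ▸ hu
  · obtain ⟨t, ht, hu⟩ := mem_edgeFresh.1 hu
    obtain ⟨o, rfl⟩ := hv
    have hPo : S.fresh o = P := hfresh o (Sym2.mem_mk_right v o)
    obtain ⟨u', hu', -, hcol⟩ := hc.exists_neighbor_avoiding (v := o) (O := P) (P := ∅)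
      (Q := {c s(t, u)}) (fun u' hu' ↦ (mem_fresh.1 (hPo ▸ hu')).1) (by simp [hP])
    by_contra hout
    have hvo : v ≠ o := (S.isRainbowMatching.1 _ he).ne
    have hvV := mem_usedVerts_of_mem he (Sym2.mem_mk_left v o)
    have hoV := mem_usedVerts_of_mem he (Sym2.mem_mk_right v o)
    obtain ⟨hadj, hu'V, hu'C⟩ := mem_fresh.1 (hPo ▸ hu')
    have := colour_eq_of_three_for_two hc hB he hl (Sym2.mem_mk_left v o) (mem_sdiff.1 hw).1 hvw ht
      hu (by grind) hadj (by simp only [Sym2.mem_iff]; grind) (.inr hu'C)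
    simp [this] at hcol

theorem exists_isBlockingPair (hc : IsProperEdgeColouring G c) (hB : #S.B = q) (he : e ∈ S.B)
    (hfresh : ∀ v ∈ e, #(S.fresh v) ≤ 3) (hload : 2 * #S.B + 2 ≤ S.load e) :
    ∃ P, S.IsBlockingPair e P := by
  obtain hempty | ⟨z, hz⟩ := (S.coloured (c e)).eq_empty_or_nonempty
  · induction e with | _ x y
    have he' : s(y, x) ∈ S.B := by rwa [Sym2.eq_swap]
    have hsum := load_add_two_le hc he
    rw [hempty, card_empty] at hsum
    have hx3 := hfresh x (Sym2.mem_mk_left x y)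
    have hy3 := hfresh y (Sym2.mem_mk_right x y)
    have hx2 := card_fresh_le_two hc he (card_pos.1 (by omega))
    have hy2 := card_fresh_le_two hc he' (card_pos.1 (by omega))
    have heq : S.fresh x = S.fresh y :=
      (fresh_subset_fresh hc he (by omega)).antisymm (fresh_subset_fresh hc he' (by omega))
    exact ⟨S.fresh y, isBlockingPair_of_fresh_eq hc hB he (by omega) (by simp [heq])⟩
  · obtain ⟨hz, z', hz', hadj, hcol⟩ := mem_coloured.1 hz
    exact ⟨{z, z'}, isBlockingPair_of_colour_eq hc hB he hz hz' hadj hcol⟩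

/-- The other matching edges whose colour also occurs on an edge from `e` to an unused vertex
outside `P`. -/
def linkedEdges (S : HubSystem G c q) (e : Sym2 V) (P : Finset V) : Finset (Sym2 V) :=
  {l ∈ S.B.erase e | ∃ v ∈ e, ∃ w ∈ S.avail v \ P, c s(v, w) = c l}

theorem linkedEdges_subset (S : HubSystem G c q) (e : Sym2 V) (P : Finset V) :
    S.linkedEdges e P ⊆ S.B.erase e :=
  filter_subset _ _

namespace IsBlockingPair

variable {P : Finset V}

theorem card_avail_le (hP : S.IsBlockingPair e P) (hc : IsProperEdgeColouring G c) (he : e ∈ S.B)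
    (hv : v ∈ e) : #(S.avail v) ≤ #(S.linkedEdges e P) + 2 := by
  have hle : #(S.avail v \ P) ≤ #((S.linkedEdges e P).image c) := by
    refine hc.card_le_of_colour_mem (v := v) (by grind) fun w hw ↦ ?_
    obtain ⟨hwa, hwP⟩ := mem_sdiff.1 hw
    obtain ⟨hadj, hwV, hwZ⟩ := mem_avail.1 hwa
    have hne := colour_ne_of_mem hc he hv hadj hwV
    have hused : c s(v, w) ∈ S.usedColours := by
      by_contra hfresh
      exact hwP (hP.edgeFresh_subset (mem_edgeFresh.2 ⟨v, hv, mem_fresh.2 ⟨hadj, hwV, hfresh⟩⟩))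
    obtain ⟨l, hl, hcol⟩ := mem_image.1 ((mem_union.1 hused).resolve_right hwZ)
    refine mem_image.2 ⟨l, mem_filter.2 ⟨mem_erase.2 ⟨?_, hl⟩, v, hv, w, hw, hcol.symm⟩, hcol⟩
    rintro rfl
    exact hne hcol.symm
  have := card_image_le (s := S.linkedEdges e P) (f := c)
  have := le_card_sdiff P (S.avail v)
  have := hP.card_le
  omega

theorem load_le (hP : S.IsBlockingPair e P) (hc : IsProperEdgeColouring G c) (he : e ∈ S.B)
    (hne : (S.edgeFresh e).Nonempty) : S.load e ≤ 2 * #(S.linkedEdges e P) + 6 := by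
  obtain ⟨u, hu⟩ := hne
  obtain ⟨v, hv, hu⟩ := mem_edgeFresh.1 hu
  have hcoloured := card_coloured_le_two hc he hv ⟨u, hu⟩
  induction e with | _ x y
  have hx := hP.card_avail_le hc he (Sym2.mem_mk_left x y)
  have hy := hP.card_avail_le hc he (Sym2.mem_mk_right x y)
  have hxy : x ≠ y := (S.isRainbowMatching.1 _ he).ne
  rw [load_mk hxy]
  omega

theorem card_free_le (hP : S.IsBlockingPair e P) (hc : IsProperEdgeColouring G c)
    (hdeg : ∀ v, q < G.degree v) : #S.free ≤ 2 + #(S.linkedEdges e P) +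
      ∑ l ∈ S.B.erase e \ S.linkedEdges e P, #(S.edgeFresh l) := by
  have hlinked : ∀ l ∈ S.linkedEdges e P, #(S.edgeFresh l \ P) ≤ 1 := fun l hl ↦ by
    obtain ⟨hl, v, hv, w, hw, hcol⟩ := mem_filter.1 hl
    have hsub := hP.edgeFresh_subset_insert v hv w hw l (mem_of_mem_erase hl) hcol
    exact (card_le_card (t := {w}) (by grind)).trans_eq (card_singleton w)
  have hcover : S.free ⊆ P ∪ (S.linkedEdges e P).biUnion (fun l ↦ S.edgeFresh l \ P) ∪
      (S.B.erase e \ S.linkedEdges e P).biUnion S.edgeFresh := fun w hw ↦ by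
    obtain ⟨l, hl, v, hv, hwv⟩ := exists_mem_fresh hc hw (hdeg w)
    have hwl : w ∈ S.edgeFresh l := mem_edgeFresh.2 ⟨v, hv, hwv⟩
    have := hP.edgeFresh_subset
    grind
  have := (card_le_card hcover).trans (card_union_le _ _)
  have := card_union_le P ((S.linkedEdges e P).biUnion fun l ↦ S.edgeFresh l \ P)
  have := card_biUnion_le_card_mul _ _ _ hlinked
  have := card_biUnion_le (s := S.B.erase e \ S.linkedEdges e P) (t := S.edgeFresh)
  have := hP.card_le
  omega

end IsBlockingPair

theorem card_linkedEdges_add (he : e ∈ S.B) (P : Finset V) :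
    #(S.linkedEdges e P) + #(S.B.erase e \ S.linkedEdges e P) + 1 = #S.B := by
  have := card_sdiff_add_card_eq_card (S.linkedEdges_subset e P)
  have := card_erase_add_one he
  omega

theorem load_le_of_card_eq (hc : IsProperEdgeColouring G c) (hdeg : ∀ v, q < G.degree v)
    (hB : #S.B = q) (hq : 3 ≤ q) (hV : 4 * q ≤ Fintype.card V) (he : e ∈ S.B) :
    S.load e ≤ 2 * q + 2 := by
  by_contra! hload
  have hfresh := fun v ↦ card_fresh_le_three hc hdeg hB hV he (v := v)
  have hcoloured := card_coloured_le_four hc hdeg hB hV he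
  obtain ⟨P, hP⟩ := exists_isBlockingPair hc hB he hfresh (by omega)
  have hne : (S.edgeFresh e).Nonempty := by
    by_contra! hempty
    induction e with | _ x y
    have hsum := load_add_two_le hc he
    simp only [edgeFresh, Sym2.toFinset_mk_eq, biUnion_insert, singleton_biUnion,
      union_eq_empty] at hempty
    rw [hempty.1, hempty.2, card_empty] at hsum
    omega
  have := hP.load_le hc he hne
  have := card_linkedEdges_add he P
  have hrest : S.B.erase e \ S.linkedEdges e P = ∅ := card_eq_zero.1 (by omega)
  have hfree := hP.card_free_le hc hdeg
  rw [hrest, sum_empty] at hfree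
  have := S.card_le_card_free_add
  have := S.card_add
  omega

theorem card_lt_of_card_eq (hc : IsProperEdgeColouring G c) (S : HubSystem G c q)
    (hdeg : ∀ v, q < G.degree v) (hB : #S.B = q) (hq : 3 ≤ q) : Fintype.card V < 4 * q := by
  by_contra! hV
  have hfree : 2 * q ≤ #S.free := by
    have := S.card_le_card_free_add
    have := S.card_add
    omega
  have hload : ∀ e ∈ S.B, S.load e = 2 * q + 2 := by
    have hle := fun e he ↦ load_le_of_card_eq hc hdeg hB hq hV (e := e) he
    refine (sum_eq_sum_iff_of_le hle).1 ((sum_le_sum hle).antisymm ?_)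
    calc ∑ _ ∈ S.B, (2 * q + 2) = 2 * q * (#S.B + 1) := by rw [sum_const, hB, smul_eq_mul]; ring
      _ ≤ #S.free * (#S.B + 1) := Nat.mul_le_mul_right _ hfree
      _ ≤ ∑ e ∈ S.B, S.load e := card_free_mul_le_sum_load hc S hdeg
  have hpair : ∀ e ∈ S.B, ∃ P, S.IsBlockingPair e P := fun e he ↦
    exists_isBlockingPair hc hB he (fun v ↦ card_fresh_le_three hc hdeg hB hV he)
      (by rw [hload e he, hB])
  obtain ⟨w, hw⟩ : S.free.Nonempty := card_pos.1 (by omega)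
  obtain ⟨e, he, v, hv, hwv⟩ := exists_mem_fresh hc hw (hdeg w)
  obtain ⟨P, hP⟩ := hpair e he
  have := hload e he
  have := hP.load_le hc he ⟨w, mem_edgeFresh.2 ⟨v, hv, hwv⟩⟩
  have := card_linkedEdges_add he P
  have := hP.card_free_le hc hdeg
  have := sum_le_card_nsmul (S.B.erase e \ S.linkedEdges e P) (fun l ↦ #(S.edgeFresh l)) 2
    fun l hl ↦ by
      obtain ⟨P', hP'⟩ := hpair l (mem_of_mem_erase (mem_sdiff.1 hl).1)
      exact (card_le_card hP'.edgeFresh_subset).trans hP'.card_le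
  rw [smul_eq_mul] at this
  omega

end HubSystem

end RainbowMatching

/-- If `G` is a properly edge-coloured graph on `n` vertices with minimum degree at
least `k ≥ 4` and `n ≥ 4k - 4`, then `G` contains a rainbow matching of size `k`. -/
theorem rainbow_matching_of_min_degree_proper {V : Type*} [Fintype V]
    (G : SimpleGraph V) [DecidableRel G.Adj] (c : Sym2 V → ℕ)
    (hproper : IsProperEdgeColouring G c) (k : ℕ) (hk : 4 ≤ k)
    (hdeg : ∀ v : V, k ≤ G.degree v)
    (hn : 4 * k - 4 ≤ Fintype.card V) :
    ∃ M : Finset (Sym2 V), IsRainbowMatching G c M ∧ M.card = k := by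
  classical
  obtain ⟨B, hB, hmax⟩ := exists_isRainbowMatching_forall_card_le G c
  suffices hkB : k ≤ #B by
    obtain ⟨M, hMB, hM⟩ := exists_subset_card_eq hkB
    exact ⟨M, hB.mono hMB, hM⟩
  by_contra! hBk
  have hdegB : ∀ v, #B < G.degree v := fun v ↦ hBk.trans_le (hdeg v)
  obtain hB3 | hB3 := le_or_gt 3 #B
  · have := HubSystem.card_lt_of_card_eq hproper (.ofMaximum hB hmax) hdegB rfl hB3
    omega
  · have := HubSystem.card_lt hproper (.ofMaximum hB hmax) hdegB (t := 3) (Nat.le_add_left _ _)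
    omega
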